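/- Let n ≥ 2 and let c : S_n × S_n → Z/2Z be defined by s(x)·s(y) = z^{c(x,y)}·s(x·y). Then c is a normalized 2-cocycle: for all x, y, w ∈ S_n one has c(x,y) + c(x·y, w) = c(y,w) + c(x, y·w) in Z/2Z; moreover c(1, x) = c(x, 1) = 0 for all x, and c(t, t) = 1 for every transposition t ∈ S_n. -/

import Mathlib

open Equiv
open scoped Classical

/-- Generator `z` as an element of the free group. -/
def zF (n : ℕ) : FreeGroup (Fin (n-1) ⊕ Unit) := FreeGroup.of (Sum.inr ())

/-- Generator `τ̃ᵢ` as an element of the free group. -/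
def tF (n : ℕ) (i : Fin (n-1)) : FreeGroup (Fin (n-1) ⊕ Unit) := FreeGroup.of (Sum.inl i)

/-- Relations of the spin extension of the symmetric group. -/
def spinRels (n : ℕ) : Set (FreeGroup (Fin (n-1) ⊕ Unit)) :=
  {zF n * zF n} ∪
  {w | ∃ i : Fin (n-1), w = zF n * tF n i * (tF n i * zF n)⁻¹} ∪
  {w | ∃ i : Fin (n-1), w = tF n i * tF n i * (zF n)⁻¹} ∪
  {w | ∃ i j : Fin (n-1), 1 < |(i : ℤ) - (j : ℤ)| ∧ w = tF n i * tF n j * (zF n * tF n j * tF n i)⁻¹} ∪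
  {w | ∃ i j : Fin (n-1), (j : ℕ) = (i : ℕ) + 1 ∧
        w = tF n i * tF n j * tF n i * (tF n j * tF n i * tF n j)⁻¹}

/-- The spin extension `S̃ₙ` of the symmetric group, as a presented group. -/
abbrev SpinSym (n : ℕ) := PresentedGroup (spinRels n)

/-- The central element `z` of `S̃ₙ`. -/
def zt (n : ℕ) : SpinSym n := PresentedGroup.of (Sum.inr ())

/-- The generator `τ̃ᵢ` of `S̃ₙ`. -/
def tt (n : ℕ) (i : Fin (n-1)) : SpinSym n := PresentedGroup.of (Sum.inl i)

/-- `i` as an element of `Fin n`. -/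
def finL (n : ℕ) (i : Fin (n-1)) : Fin n := ⟨i, by have := i.2; omega⟩

/-- `i+1` as an element of `Fin n`. -/
def finR (n : ℕ) (i : Fin (n-1)) : Fin n := ⟨(i : ℕ) + 1, by have := i.2; omega⟩

/-- `τ̃ₖ` for a natural number index, `1` out of range. -/
def ttN (n : ℕ) (k : ℕ) : SpinSym n := if h : k < n - 1 then tt n ⟨k, h⟩ else 1

/-- For `i ≤ j`, the word `τ̃ᵢ·τ̃ᵢ₊₁⋯τ̃ⱼ₋₂·τ̃ⱼ₋₁·τ̃ⱼ₋₂⋯τ̃ᵢ₊₁·τ̃ᵢ` (equal to `1` when `i = j`). -/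
def ttilCore (n i j : ℕ) : SpinSym n :=
  (((List.range' i (j - i)) ++ (List.range' i (j - 1 - i)).reverse).map (ttN n)).prod

/-- The lifted transpositions `τ̃_{i,j}`, with `τ̃_{j,i} = z·τ̃_{i,j}` for `i < j`,
and `τ̃_{k,k} = 1`. -/
def ttil (n i j : ℕ) : SpinSym n := if j < i then zt n * ttilCore n j i else ttilCore n i j

/-- `i` is the sequence of indices of a factorization of `x` as a product of
transpositions `t_{i_0,0} ⋯ t_{i_{n-1},n-1}` with `i_k ≤ k`. -/
def IsFactorization (n : ℕ) (x : Equiv.Perm (Fin n)) (i : Fin n → Fin n) : Prop :=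
  (∀ k, i k ≤ k) ∧ x = ((List.finRange n).map (fun k => Equiv.swap (i k) k)).prod

/-- The section `s : Sₙ → S̃ₙ`, defined from the unique factorization
`x = t_{i_0,0} ⋯ t_{i_{n-1},n-1}` by `s x = τ̃_{i_0,0} ⋯ τ̃_{i_{n-1},n-1}`. -/
noncomputable def sec (n : ℕ) (x : Equiv.Perm (Fin n)) : SpinSym n :=
  if h : ∃ i, IsFactorization n x i then
    ((List.finRange n).map (fun k => ttil n (h.choose k).val k.val)).prod
  else 1

/-- The `2`-cocycle `c : Sₙ × Sₙ → ℤ/2ℤ` defined by `s(x)·s(y) = z^{c(x,y)}·s(x·y)`. -/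
noncomputable def coc (n : ℕ) (x y : Equiv.Perm (Fin n)) : ZMod 2 :=
  if sec n x * sec n y = sec n (x * y) then 0 else 1

/-- The product `t (i + d - 1) ⋯ t (i + 1) * t i`. -/
def descProd {G : Type*} [Group G] (t : ℕ → G) (i d : ℕ) : G :=
  ((List.range' i d).reverse.map t).prod

/-- The product `t i ⋯ t (j - 1) ⋯ t i` lifting the transposition of `i` and `j`. -/
def palindromeProd {G : Type*} [Group G] (t : ℕ → G) (i j : ℕ) : G :=
  (((List.range' i (j - i)) ++ (List.range' i (j - 1 - i)).reverse).map t).prod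

/-- The Coxeter relations of type `A` for the elements `t k` with `k < N`. -/
structure CoxeterRelA {G : Type*} [Group G] (t : ℕ → G) (N : ℕ) : Prop where
  sq : ∀ k < N, t k * t k = 1
  comm : ∀ k l, k + 1 < l → l < N → Commute (t k) (t l)
  braid : ∀ k, k + 1 < N → t k * t (k + 1) * t k = t (k + 1) * t k * t (k + 1)

section CoxeterA

variable {G : Type*} [Group G] {t : ℕ → G} {N : ℕ}

@[simp]
lemma descProd_zero (t : ℕ → G) (i : ℕ) : descProd t i 0 = 1 := rfl

lemma descProd_succ (t : ℕ → G) (i d : ℕ) :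
    descProd t i (d + 1) = t (i + d) * descProd t i d := by
  simp [descProd, List.range'_concat]

lemma descProd_succ_right (t : ℕ → G) (i d : ℕ) :
    descProd t i (d + 1) = descProd t (i + 1) d * t i := by
  simp [descProd, List.range'_succ]

@[simp]
lemma palindromeProd_self (t : ℕ → G) (i : ℕ) : palindromeProd t i i = 1 := by
  simp [palindromeProd]

@[simp]
lemma palindromeProd_succ (t : ℕ → G) (i : ℕ) : palindromeProd t i (i + 1) = t i := by
  simp [palindromeProd]

lemma palindromeProd_conj (t : ℕ → G) (i d : ℕ) :
    palindromeProd t i (i + 1 + (d + 1)) =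
      t i * palindromeProd t (i + 1) (i + 1 + (d + 1)) * t i := by
  have h₁ : i + 1 + (d + 1) - i = d + 1 + 1 := by omega
  have h₂ : i + 1 + (d + 1) - 1 - i = d + 1 := by omega
  have h₃ : i + 1 + (d + 1) - (i + 1) = d + 1 := by omega
  have h₄ : i + 1 + (d + 1) - 1 - (i + 1) = d := by omega
  rw [palindromeProd, palindromeProd, h₁, h₂, h₃, h₄, List.range'_succ,
    List.range'_succ (s := i) (n := d)]
  simp [mul_assoc]

lemma palindromeProd_eq_mul_descProd (t : ℕ → G) (i d : ℕ) :
    palindromeProd t i (i + (d + 1)) =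
      ((List.range' i d).map t).prod * descProd t i (d + 1) := by
  have h₁ : i + (d + 1) - i = d + 1 := by omega
  have h₂ : i + (d + 1) - 1 - i = d := by omega
  rw [palindromeProd, h₁, h₂, descProd_succ, descProd, List.range'_concat]
  simp

lemma map_palindromeProd {H : Type*} [Group H] (f : G →* H) (t : ℕ → G) (i j : ℕ) :
    f (palindromeProd t i j) = palindromeProd (f ∘ t) i j := by
  simp [palindromeProd, map_list_prod]

lemma CoxeterRelA.descProd_commute (ht : CoxeterRelA t N) {i d l : ℕ} (hd : i + d ≤ N)
    (hl : l < N) (h : l + 1 < i ∨ i + d < l) : Commute (descProd t i d) (t l) := by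
  induction d with
  | zero => simp
  | succ d ih =>
    rw [descProd_succ]
    refine Commute.mul_left ?_ (ih (by omega) (by omega))
    rcases h with h | h
    · exact (ht.comm l (i + d) (by omega) (by omega)).symm
    · exact ht.comm (i + d) l (by omega) hl

lemma CoxeterRelA.descProd_mul (ht : CoxeterRelA t N) {i d l : ℕ} (hd : i + d ≤ N)
    (hil : i ≤ l) (hl : l + 1 < i + d) :
    descProd t i d * t (l + 1) = t l * descProd t i d := by
  induction d with
  | zero => omega
  | succ d ih =>
    rw [descProd_succ]
    rcases Nat.lt_or_ge (l + 1) (i + d) with h | h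
    · rw [mul_assoc, ih (by omega) h, ← mul_assoc, ← mul_assoc,
        (ht.comm l (i + d) h (by omega)).eq]
    · obtain ⟨e, rfl⟩ : ∃ e, d = e + 1 := ⟨d - 1, by omega⟩
      obtain rfl : l = i + e := by omega
      have hc := ht.descProd_commute (i := i) (d := e) (l := i + e + 1) (by omega) (by omega)
        (Or.inr (by omega))
      rw [descProd_succ, mul_assoc, mul_assoc, hc.eq, ← add_assoc]
      simp only [← mul_assoc]
      rw [ht.braid (i + e) (by omega)]

lemma CoxeterRelA.exists_coset_rep (ht : CoxeterRelA t N) {m : ℕ} (hm : m + 1 ≤ N) {g : G}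
    (hg : g ∈ Subgroup.closure (t '' Set.Iio (m + 1))) :
    ∃ h ∈ Subgroup.closure (t '' Set.Iio m), ∃ i d, i + d = m + 1 ∧ g = h * descProd t i d := by
  have key : ∀ x : G, ∀ l < m + 1,
      (∃ h ∈ Subgroup.closure (t '' Set.Iio m), ∃ i d, i + d = m + 1 ∧ x = h * descProd t i d) →
      ∃ h ∈ Subgroup.closure (t '' Set.Iio m), ∃ i d,
        i + d = m + 1 ∧ x * t l = h * descProd t i d := by
    rintro x l hl ⟨h, hh, i, d, hid, rfl⟩
    have hmem : ∀ k < m, h * t k ∈ Subgroup.closure (t '' Set.Iio m) := fun k hk =>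
      mul_mem hh (Subgroup.subset_closure ⟨k, hk, rfl⟩)
    rcases lt_trichotomy l i with hli | rfl | hli
    · rcases Nat.lt_or_ge (l + 1) i with h1 | h1
      · refine ⟨h * t l, hmem l (by omega), i, d, hid, ?_⟩
        rw [mul_assoc, (ht.descProd_commute (by omega) (by omega) (Or.inl h1)).eq, mul_assoc]
      · obtain rfl : i = l + 1 := by omega
        exact ⟨h, hh, l, d + 1, by omega, by rw [descProd_succ_right, mul_assoc]⟩
    · obtain ⟨e, rfl⟩ : ∃ e, d = e + 1 := ⟨d - 1, by omega⟩
      refine ⟨h, hh, l + 1, e, by omega, ?_⟩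
      rw [descProd_succ_right, mul_assoc, mul_assoc, ht.sq l (by omega), mul_one]
    · obtain ⟨k, rfl⟩ : ∃ k, l = k + 1 := ⟨l - 1, by omega⟩
      refine ⟨h * t k, hmem k (by omega), i, d, hid, ?_⟩
      rw [mul_assoc, ht.descProd_mul (by omega) (by omega) (by omega), mul_assoc]
  induction hg using Subgroup.closure_induction_right with
  | one => exact ⟨1, one_mem _, m + 1, 0, rfl, by simp⟩
  | mul_right x _ y hy ih =>
    obtain ⟨l, hl, rfl⟩ := hy
    exact key x l hl ih
  | mul_inv_cancel x _ y hy ih =>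
    obtain ⟨l, hl, rfl⟩ := hy
    rw [inv_eq_of_mul_eq_one_left (ht.sq l (lt_of_lt_of_le hl hm))]
    exact key x l hl ih

/-- Normal form for the elements of a group generated by elements satisfying the Coxeter
relations of type `A`. -/
lemma CoxeterRelA.exists_normalForm (ht : CoxeterRelA t N) {m : ℕ} (hm : m ≤ N) {g : G}
    (hg : g ∈ Subgroup.closure (t '' Set.Iio m)) :
    ∃ i : ℕ → ℕ, (∀ k, i k ≤ k) ∧
      g = ((List.range (m + 1)).map fun k => palindromeProd t (i k) k).prod := by
  induction m generalizing g with
  | zero =>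
    refine ⟨id, fun _ => le_rfl, ?_⟩
    have : g = 1 := by simpa [Set.Iio_eq_empty_iff.2] using hg
    simp [this]
  | succ m ih =>
    obtain ⟨h, hh, i, d, hid, rfl⟩ := ht.exists_coset_rep hm hg
    obtain ⟨h', hh', hprod⟩ : ∃ h' ∈ Subgroup.closure (t '' Set.Iio m),
        h * descProd t i d = h' * palindromeProd t i (m + 1) := by
      cases d with
      | zero => exact ⟨h, hh, by simp [← hid]⟩
      | succ d =>
        refine ⟨h * (((List.range' i d).map t).prod)⁻¹, mul_mem hh (inv_mem ?_), ?_⟩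
        · refine Subgroup.list_prod_mem _ fun x hx => ?_
          obtain ⟨k, hk, rfl⟩ := List.mem_map.1 hx
          rw [List.mem_range'_1] at hk
          exact Subgroup.subset_closure ⟨k, Set.mem_Iio.2 (by omega), rfl⟩
        · rw [← hid, palindromeProd_eq_mul_descProd]
          group
    obtain ⟨f, hf, rfl⟩ := ih (by omega) hh'
    refine ⟨Function.update f (m + 1) i, fun k => ?_, ?_⟩
    · rcases eq_or_ne k (m + 1) with rfl | hk
      · simp only [Function.update_self]
        omega
      · simpa [Function.update_of_ne hk] using hf k
    · rw [hprod, List.range_succ (n := m + 1), List.map_append, List.prod_append]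
      simp only [List.map_cons, List.map_nil, List.prod_singleton, Function.update_self]
      congr 2
      refine List.map_congr_left fun k hk => ?_
      rw [Function.update_of_ne (List.mem_range.1 hk).ne]

end CoxeterA

section Presentation

variable {n : ℕ}

lemma zt_mul_zt (n : ℕ) : zt n * zt n = 1 :=
  PresentedGroup.one_of_mem (rels := spinRels n) (x := zF n * zF n) (by simp [spinRels])

lemma zt_mul_tt (i : Fin (n - 1)) : zt n * tt n i = tt n i * zt n :=
  PresentedGroup.mk_eq_mk_of_mul_inv_mem (rels := spinRels n) (x := zF n * tF n i)
    (y := tF n i * zF n) (Or.inl (Or.inl (Or.inl (Or.inr ⟨i, rfl⟩))))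

lemma tt_mul_tt (i : Fin (n - 1)) : tt n i * tt n i = zt n :=
  PresentedGroup.mk_eq_mk_of_mul_inv_mem (rels := spinRels n) (x := tF n i * tF n i)
    (y := zF n) (Or.inl (Or.inl (Or.inr ⟨i, rfl⟩)))

lemma tt_mul_tt_of_lt {i j : Fin (n - 1)} (h : (i : ℕ) + 1 < j) :
    tt n i * tt n j = zt n * tt n j * tt n i := by
  refine PresentedGroup.mk_eq_mk_of_mul_inv_mem (rels := spinRels n) (x := tF n i * tF n j)
    (y := zF n * tF n j * tF n i) (Or.inl (Or.inr ⟨i, j, ?_, rfl⟩))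
  rw [lt_abs]
  omega

lemma tt_braid {i j : Fin (n - 1)} (h : (j : ℕ) = i + 1) :
    tt n i * tt n j * tt n i = tt n j * tt n i * tt n j :=
  PresentedGroup.mk_eq_mk_of_mul_inv_mem (rels := spinRels n)
    (x := tF n i * tF n j * tF n i) (y := tF n j * tF n i * tF n j)
    (Or.inr ⟨i, j, h, rfl⟩)

/-- The universal property of the spin extension. -/
def SpinSym.lift {G : Type*} [Group G] (z : G) (t : Fin (n - 1) → G) (hz : z * z = 1)
    (hzt : ∀ i, z * t i = t i * z) (hsq : ∀ i, t i * t i = z)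
    (hcomm : ∀ i j : Fin (n - 1), 1 < |(i : ℤ) - (j : ℤ)| → t i * t j = z * t j * t i)
    (hbraid : ∀ i j : Fin (n - 1), (j : ℕ) = i + 1 → t i * t j * t i = t j * t i * t j) :
    SpinSym n →* G :=
  PresentedGroup.toGroup (f := Sum.elim t fun _ => z) (by
    rintro r ((((rfl | ⟨i, rfl⟩) | ⟨i, rfl⟩) | ⟨i, j, h, rfl⟩) | ⟨i, j, h, rfl⟩) <;>
      simp only [zF, tF, map_mul, map_inv, FreeGroup.lift_apply_of, Sum.elim_inl, Sum.elim_inr,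
        mul_inv_eq_one]
    exacts [hz, hzt i, hsq i, hcomm i j h, hbraid i j h])

section Lift

variable {G : Type*} [Group G] {z : G} {t : Fin (n - 1) → G} (hz : z * z = 1)
    (hzt : ∀ i, z * t i = t i * z) (hsq : ∀ i, t i * t i = z)
    (hcomm : ∀ i j : Fin (n - 1), 1 < |(i : ℤ) - (j : ℤ)| → t i * t j = z * t j * t i)
    (hbraid : ∀ i j : Fin (n - 1), (j : ℕ) = i + 1 → t i * t j * t i = t j * t i * t j)

lemma SpinSym.lift_zt : SpinSym.lift z t hz hzt hsq hcomm hbraid (zt n) = z := by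
  rw [SpinSym.lift, zt, PresentedGroup.toGroup.of, Sum.elim_inr]

lemma SpinSym.lift_tt (i : Fin (n - 1)) :
    SpinSym.lift z t hz hzt hsq hcomm hbraid (tt n i) = t i := by
  rw [SpinSym.lift, tt, PresentedGroup.toGroup.of, Sum.elim_inl]

end Lift

lemma zt_mem_center (n : ℕ) : zt n ∈ Subgroup.center (SpinSym n) := by
  have h : Subgroup.centralizer {zt n} = ⊤ := by
    rw [eq_top_iff, ← PresentedGroup.closure_range_of, Subgroup.closure_le]
    rintro _ ⟨i | u, rfl⟩
    · exact Subgroup.mem_centralizer_singleton_iff.2 (zt_mul_tt i).symm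
    · exact Subgroup.mem_centralizer_singleton_iff.2 rfl
  refine Subgroup.mem_center_iff.2 fun g => ?_
  exact Subgroup.mem_centralizer_singleton_iff.1 (h ▸ Subgroup.mem_top g)

lemma zt_comm (g : SpinSym n) : g * zt n = zt n * g :=
  Subgroup.mem_center_iff.1 (zt_mem_center n) g

lemma mem_zpowers_zt {g : SpinSym n} (hg : g ∈ Subgroup.zpowers (zt n)) : g = 1 ∨ g = zt n := by
  have hz : zt n * zt n = 1 := zt_mul_zt n
  obtain ⟨k, rfl⟩ := Subgroup.mem_zpowers_iff.1 hg
  rcases Int.even_or_odd' k with ⟨m, rfl | rfl⟩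
  · left
    rw [zpow_mul, zpow_two, hz, one_zpow]
  · right
    rw [zpow_add, zpow_mul, zpow_two, hz, one_zpow, one_mul, zpow_one]

instance zpowers_zt_normal (n : ℕ) : (Subgroup.zpowers (zt n)).Normal where
  conj_mem x hx g := by
    rcases mem_zpowers_zt hx with rfl | rfl
    · simp
    · simp [zt_comm g]

end Presentation

section Clifford

open CliffordAlgebra

/-- The quadratic form `-(1/2) ∑ xᵢ²`, for which the vectors `eᵢ - eⱼ` square to `-1`. -/
noncomputable def halfNegForm (n : ℕ) : QuadraticForm ℚ (Fin n → ℚ) :=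
  QuadraticMap.weightedSumSquares ℚ fun _ => (-1 / 2 : ℚ)

lemma halfNegForm_apply {n : ℕ} (v : Fin n → ℚ) : halfNegForm n v = -1 / 2 * (v ⬝ᵥ v) := by
  simp [halfNegForm, QuadraticMap.weightedSumSquares_apply, dotProduct, Finset.mul_sum]

lemma polar_halfNegForm {n : ℕ} (u v : Fin n → ℚ) :
    QuadraticMap.polar (halfNegForm n) u v = -(u ⬝ᵥ v) := by
  simp only [QuadraticMap.polar, halfNegForm_apply, add_dotProduct, dotProduct_add,
    dotProduct_comm v u]
  ring

/-- The simple root `eᵢ - eᵢ₊₁`. -/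
def simpleRoot (n : ℕ) (i : Fin (n - 1)) : Fin n → ℚ :=
  Pi.single (finL n i) 1 - Pi.single (finR n i) 1

lemma finL_ne_finR {n : ℕ} (i : Fin (n - 1)) : finL n i ≠ finR n i := by
  simp [finL, finR]

lemma ι_simpleRoot_sq {n : ℕ} (i : Fin (n - 1)) :
    ι (halfNegForm n) (simpleRoot n i) * ι (halfNegForm n) (simpleRoot n i) = -1 := by
  have : halfNegForm n (simpleRoot n i) = -1 := by
    rw [halfNegForm_apply]
    simp [simpleRoot, finL_ne_finR, (finL_ne_finR i).symm]
    norm_num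
  rw [ι_sq_scalar, this, map_neg, map_one]

lemma ι_simpleRoot_anticomm {n : ℕ} {i j : Fin (n - 1)} (h : 1 < |(i : ℤ) - (j : ℤ)|) :
    ι (halfNegForm n) (simpleRoot n i) * ι (halfNegForm n) (simpleRoot n j) =
      -(ι (halfNegForm n) (simpleRoot n j) * ι (halfNegForm n) (simpleRoot n i)) := by
  rw [eq_neg_iff_add_eq_zero, ι_mul_ι_add_swap, polar_halfNegForm]
  rw [lt_abs] at h
  have h₁ : (i : ℕ) ≠ j := by omega
  have h₂ : (i : ℕ) ≠ j + 1 := by omega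
  have h₃ : (i : ℕ) + 1 ≠ j := by omega
  simp [simpleRoot, finL, finR, h₁, h₂, h₃]

lemma ι_simpleRoot_braid {n : ℕ} {i j : Fin (n - 1)} (h : (j : ℕ) = i + 1) :
    ι (halfNegForm n) (simpleRoot n i) * ι (halfNegForm n) (simpleRoot n j) *
        ι (halfNegForm n) (simpleRoot n i) =
      ι (halfNegForm n) (simpleRoot n j) * ι (halfNegForm n) (simpleRoot n i) *
        ι (halfNegForm n) (simpleRoot n j) := by
  have hadd : ι (halfNegForm n) (simpleRoot n i) * ι (halfNegForm n) (simpleRoot n j) +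
      ι (halfNegForm n) (simpleRoot n j) * ι (halfNegForm n) (simpleRoot n i) = 1 := by
    rw [ι_mul_ι_add_swap, polar_halfNegForm]
    have h' : (i : ℕ) + 1 + 1 ≠ i := by omega
    simp [simpleRoot, finL, finR, h, h']
  have hi := ι_simpleRoot_sq i
  have hj := ι_simpleRoot_sq j
  generalize ι (halfNegForm n) (simpleRoot n i) = u at *
  generalize ι (halfNegForm n) (simpleRoot n j) = v at *
  have hvu : v * u = 1 - u * v := eq_sub_of_add_eq' hadd
  have huv : u * v = 1 - v * u := eq_sub_of_add_eq hadd
  calc u * v * u = u * (v * u) := mul_assoc _ _ _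
    _ = u - u * u * v := by rw [hvu, mul_sub, mul_one, mul_assoc]
    _ = v - v * v * u := by rw [hi, hj]; noncomm_ring
    _ = v * u * v := by rw [mul_assoc v u v, huv, mul_sub, mul_one, mul_assoc]

/-- The simple root `eᵢ - eᵢ₊₁` as a unit of the Clifford algebra. -/
noncomputable def simpleRootUnit (n : ℕ) (i : Fin (n - 1)) :
    (CliffordAlgebra (halfNegForm n))ˣ where
  val := ι (halfNegForm n) (simpleRoot n i)
  inv := -ι (halfNegForm n) (simpleRoot n i)
  val_inv := by rw [mul_neg, ι_simpleRoot_sq, neg_neg]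
  inv_val := by rw [neg_mul, ι_simpleRoot_sq, neg_neg]

/-- The spin representation of `S̃ₙ` in the units of a Clifford algebra. -/
noncomputable def spinRep (n : ℕ) : SpinSym n →* (CliffordAlgebra (halfNegForm n))ˣ :=
  SpinSym.lift (-1) (simpleRootUnit n) (by simp) (by simp)
    (fun i => Units.ext (ι_simpleRoot_sq i))
    (fun i j h => Units.ext <| by
      simpa [simpleRootUnit] using ι_simpleRoot_anticomm h)
    (fun i j h => Units.ext (ι_simpleRoot_braid h))

lemma zt_ne_one (n : ℕ) : zt n ≠ 1 := by
  intro h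
  have h₁ : spinRep n (zt n) = -1 := by rw [spinRep, SpinSym.lift_zt]
  rw [h, map_one] at h₁
  have h₂ : algebraMap ℚ (CliffordAlgebra (halfNegForm n)) 1 = algebraMap ℚ _ (-1) := by
    simpa using congrArg Units.val h₁
  have h₃ := (algebraMap ℚ (CliffordAlgebra (halfNegForm n))).injective h₂
  norm_num at h₃

end Clifford

section Projection

variable {n : ℕ}

lemma swap_conj {α : Type*} [DecidableEq α] {a b c : α} (hac : a ≠ c) (hbc : b ≠ c) :
    Equiv.swap a b * Equiv.swap b c * Equiv.swap a b = Equiv.swap a c := by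
  rw [Equiv.swap_comm a b, Equiv.swap_comm b c, Equiv.swap_mul_swap_mul_swap hbc.symm hac.symm]

/-- The projection `p : S̃ₙ → Sₙ`. -/
def spinProj (n : ℕ) : SpinSym n →* Equiv.Perm (Fin n) :=
  SpinSym.lift 1 (fun i => Equiv.swap (finL n i) (finR n i)) (by simp) (by simp) (by simp)
    (fun i j h => by
      rw [lt_abs] at h
      rw [one_mul]
      refine (Equiv.Perm.Disjoint.commute ?_).eq
      rw [Equiv.Perm.disjoint_iff_disjoint_support, Equiv.Perm.support_swap (finL_ne_finR i),
        Equiv.Perm.support_swap (finL_ne_finR j)]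
      simp [finL, finR]
      omega)
    (fun i j h => by
      have hL : finL n j = finR n i := Fin.ext h
      have h₁ : finL n i ≠ finR n j := by simp [finL, finR, h, add_assoc]
      have h₂ : finR n i ≠ finR n j := by simp [finR, h]
      rw [hL, swap_conj h₁ h₂, Equiv.swap_mul_swap_mul_swap (finL_ne_finR i) h₁,
        Equiv.swap_comm])

lemma spinProj_zt (n : ℕ) : spinProj n (zt n) = 1 := by rw [spinProj, SpinSym.lift_zt]

lemma spinProj_ttN {k : ℕ} (hk : k + 1 < n) :
    spinProj n (ttN n k) = Equiv.swap ⟨k, by omega⟩ ⟨k + 1, hk⟩ := by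
  rw [ttN, dif_pos (by omega), spinProj, SpinSym.lift_tt]
  rfl

lemma ttilCore_eq (n i j : ℕ) : ttilCore n i j = palindromeProd (ttN n) i j := rfl

lemma spinProj_ttilCore (i d : ℕ) (h : i + d < n) :
    spinProj n (ttilCore n i (i + d)) = Equiv.swap ⟨i, by omega⟩ ⟨i + d, h⟩ := by
  simp only [ttilCore_eq]
  induction d generalizing i with
  | zero => simp [Equiv.Perm.one_def]
  | succ d ih =>
    cases d with
    | zero => simpa using spinProj_ttN h
    | succ d =>
      have e : i + (d + 1 + 1) = i + 1 + (d + 1) := by omega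
      have hih := ih (i + 1) (by omega)
      simp only [e]
      rw [palindromeProd_conj, map_mul, map_mul, hih, spinProj_ttN (by omega),
        swap_conj (by simp; omega) (by simp)]

lemma spinProj_ttil {i j : Fin n} (h : i ≤ j) : spinProj n (ttil n i j) = Equiv.swap i j := by
  have hd : (i : ℕ) + (j - i) = j := Nat.add_sub_cancel' h
  have := spinProj_ttilCore (n := n) i (j - i) (by omega)
  rw [ttil, if_neg (by simpa using h)]
  simpa only [hd] using this

end Projection

section Uniqueness

variable {α : Type*} [LinearOrder α]

lemma prod_map_swap_apply_of_lt {l : List α} {i : α → α} (hi : ∀ k, i k ≤ k) {a : α}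
    (ha : ∀ k ∈ l, k < a) : (l.map fun k => Equiv.swap (i k) k).prod a = a := by
  induction l with
  | nil => simp
  | cons b l ih =>
    have hb : b < a := ha b (by simp)
    rw [List.map_cons, List.prod_cons, Equiv.Perm.mul_apply,
      ih fun k hk => ha k (List.mem_cons_of_mem _ hk),
      Equiv.swap_apply_of_ne_of_ne ((hi b).trans_lt hb).ne' hb.ne']

lemma eq_self_of_prod_map_swap_eq_one {l : List α} (hl : l.Pairwise (· < ·)) {i : α → α}
    (hi : ∀ k, i k ≤ k) (h : (l.map fun k => Equiv.swap (i k) k).prod = 1) :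
    ∀ k ∈ l, i k = k := by
  induction l using List.reverseRecOn with
  | nil => simp
  | append_singleton l a ih =>
    rw [List.pairwise_append] at hl
    have hfix := prod_map_swap_apply_of_lt hi (l := l) (a := a) fun k hk =>
      hl.2.2 k hk a (by simp)
    rw [List.map_append, List.prod_append, List.map_singleton, List.prod_singleton] at h
    have ha : i a = a := by
      rw [eq_inv_of_mul_eq_one_left h, Equiv.swap_inv, Equiv.swap_apply_right] at hfix
      exact hfix
    rw [ha, Equiv.swap_self, ← Equiv.Perm.one_def, mul_one] at h
    intro k hk
    rcases List.mem_append.1 hk with hk | hk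
    · exact ih hl.1 h k hk
    · rw [List.mem_singleton.1 hk, ha]

end Uniqueness

section SpinSection

variable {n : ℕ}

/-- The images of the generators in `S̃ₙ / ⟨z⟩` satisfy the Coxeter relations. -/
lemma coxeterRelA_mk_ttN (n : ℕ) :
    CoxeterRelA (fun k => QuotientGroup.mk' (Subgroup.zpowers (zt n)) (ttN n k)) (n - 1) where
  sq k hk := by
    rw [← map_mul, ttN, dif_pos hk, tt_mul_tt]
    exact (QuotientGroup.eq_one_iff _).2 (Subgroup.mem_zpowers _)
  comm k l h hl := by
    have hz : QuotientGroup.mk' (Subgroup.zpowers (zt n)) (zt n) = 1 :=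
      (QuotientGroup.eq_one_iff _).2 (Subgroup.mem_zpowers _)
    rw [Commute, SemiconjBy, ← map_mul, ← map_mul, ttN, ttN, dif_pos (by omega), dif_pos hl,
      tt_mul_tt_of_lt h, mul_assoc, map_mul, hz, one_mul]
  braid k hk := by
    simp only [← map_mul]
    rw [ttN, ttN, dif_pos (by omega), dif_pos hk, tt_braid rfl]

lemma mem_closure_mk_ttN (g : SpinSym n) :
    QuotientGroup.mk' (Subgroup.zpowers (zt n)) g ∈ Subgroup.closure
      ((fun k => QuotientGroup.mk' (Subgroup.zpowers (zt n)) (ttN n k)) '' Set.Iio (n - 1)) := by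
  have hg : g ∈ Subgroup.closure (Set.range (PresentedGroup.of (rels := spinRels n))) := by
    rw [PresentedGroup.closure_range_of]
    exact Subgroup.mem_top g
  rw [← Subgroup.mem_comap]
  refine (Subgroup.closure_le _).2 ?_ hg
  rintro _ ⟨i | u, rfl⟩
  · exact Subgroup.subset_closure ⟨i, i.2, by simp [ttN, tt]⟩
  · have : QuotientGroup.mk' (Subgroup.zpowers (zt n)) (zt n) = 1 :=
      (QuotientGroup.eq_one_iff _).2 (Subgroup.mem_zpowers _)
    rw [SetLike.mem_coe, Subgroup.mem_comap]
    exact this ▸ one_mem _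

/-- The product `τ̃_{i_0,0} ⋯ τ̃_{i_{n-1},n-1}`. -/
def normalForm (n : ℕ) (i : Fin n → Fin n) : SpinSym n :=
  ((List.finRange n).map fun k => ttil n (i k).val k.val).prod

lemma exists_eq_normalForm (hn : 0 < n) (g : SpinSym n) :
    ∃ i : Fin n → Fin n, (∀ k, i k ≤ k) ∧
      (g = normalForm n i ∨ g = normalForm n i * zt n) := by
  obtain ⟨f, hf, hg⟩ := (coxeterRelA_mk_ttN n).exists_normalForm le_rfl (mem_closure_mk_ttN g)
  refine ⟨fun k => ⟨f k, (hf k).trans_lt k.2⟩, fun k => hf k, ?_⟩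
  have hnf : normalForm n (fun k => ⟨f k, (hf k).trans_lt k.2⟩) =
      ((List.range n).map fun k => palindromeProd (ttN n) (f k) k).prod := by
    rw [normalForm, ← List.map_coe_finRange_eq_range, List.map_map]
    congr 1
    refine List.map_congr_left fun k _ => ?_
    simp [ttil, ttilCore_eq, (hf k).not_gt]
  have hmk : QuotientGroup.mk' (Subgroup.zpowers (zt n))
      (normalForm n (fun k => ⟨f k, (hf k).trans_lt k.2⟩)) = QuotientGroup.mk' _ g := by
    rw [hg, hnf, Nat.sub_add_cancel hn, map_list_prod, List.map_map]
    congr 1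
    exact List.map_congr_left fun k _ => map_palindromeProd _ _ _ _
  rcases mem_zpowers_zt (QuotientGroup.eq.1 hmk) with h | h
  · exact Or.inl (inv_mul_eq_one.1 h).symm
  · exact Or.inr (inv_mul_eq_iff_eq_mul.1 h)

lemma spinProj_normalForm {i : Fin n → Fin n} (hi : ∀ k, i k ≤ k) :
    spinProj n (normalForm n i) =
      ((List.finRange n).map fun k => Equiv.swap (i k) k).prod := by
  rw [normalForm, map_list_prod, List.map_map]
  congr 1
  exact List.map_congr_left fun k _ => spinProj_ttil (hi k)

lemma normalForm_eq_one {i : Fin n → Fin n} (hi : ∀ k, i k ≤ k)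
    (h : ((List.finRange n).map fun k => Equiv.swap (i k) k).prod = 1) : normalForm n i = 1 := by
  have := eq_self_of_prod_map_swap_eq_one (List.pairwise_lt_finRange n) hi h
  refine List.prod_eq_one fun x hx => ?_
  obtain ⟨k, hk, rfl⟩ := List.mem_map.1 hx
  simp [this k hk, ttil, ttilCore_eq]

/-- The kernel of the projection `S̃ₙ → Sₙ` is `{1, z}`. -/
lemma eq_one_or_eq_zt_of_spinProj_eq_one (hn : 0 < n) {g : SpinSym n} (hg : spinProj n g = 1) :
    g = 1 ∨ g = zt n := by
  obtain ⟨i, hi, hgi⟩ := exists_eq_normalForm hn g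
  have hp : spinProj n (normalForm n i) = 1 := by
    rcases hgi with rfl | rfl
    · exact hg
    · rwa [map_mul, spinProj_zt, mul_one] at hg
  rwa [normalForm_eq_one hi (spinProj_normalForm hi ▸ hp), one_mul] at hgi

lemma eq_or_eq_zt_mul (hn : 0 < n) {g h : SpinSym n} (hgh : spinProj n g = spinProj n h) :
    g = h ∨ g = zt n * h := by
  have h₁ : spinProj n (g * h⁻¹) = 1 := by rw [map_mul, map_inv, hgh, mul_inv_cancel]
  rcases eq_one_or_eq_zt_of_spinProj_eq_one hn h₁ with h₂ | h₂
  · exact Or.inl (mul_inv_eq_one.1 h₂)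
  · exact Or.inr (mul_inv_eq_iff_eq_mul.1 h₂)

lemma spinProj_surjective (n : ℕ) : Function.Surjective (spinProj n) := by
  rw [← MonoidHom.range_eq_top, eq_top_iff, ← Equiv.Perm.closure_isSwap, Subgroup.closure_le]
  rintro _ ⟨i, j, -, rfl⟩
  rcases le_total i j with h | h
  · exact ⟨_, spinProj_ttil h⟩
  · exact ⟨_, (spinProj_ttil h).trans (Equiv.swap_comm _ _)⟩

lemma exists_isFactorization (hn : 0 < n) (x : Equiv.Perm (Fin n)) :
    ∃ i, IsFactorization n x i := by
  obtain ⟨g, rfl⟩ := spinProj_surjective n x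
  obtain ⟨i, hi, rfl | rfl⟩ := exists_eq_normalForm hn g
  · exact ⟨i, hi, spinProj_normalForm hi⟩
  · exact ⟨i, hi, by rw [map_mul, spinProj_zt, mul_one, spinProj_normalForm hi]⟩

lemma exists_sec_eq_normalForm (hn : 0 < n) (x : Equiv.Perm (Fin n)) :
    ∃ i, IsFactorization n x i ∧ sec n x = normalForm n i := by
  have h := exists_isFactorization hn x
  exact ⟨h.choose, h.choose_spec, dif_pos h⟩

lemma spinProj_sec (hn : 0 < n) (x : Equiv.Perm (Fin n)) : spinProj n (sec n x) = x := by
  obtain ⟨i, ⟨hi, hx⟩, hs⟩ := exists_sec_eq_normalForm hn x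
  rw [hs, spinProj_normalForm hi, ← hx]

lemma sec_one (hn : 0 < n) : sec n 1 = 1 := by
  obtain ⟨i, ⟨hi, hx⟩, hs⟩ := exists_sec_eq_normalForm hn (1 : Equiv.Perm (Fin n))
  rw [hs, normalForm_eq_one hi hx.symm]

lemma ttilCore_mul_self (i d : ℕ) (h : i + (d + 1) < n) :
    ttilCore n i (i + (d + 1)) * ttilCore n i (i + (d + 1)) = zt n := by
  have hsq : ∀ k, k + 1 < n → ttN n k * ttN n k = zt n := fun k hk => by
    rw [ttN, dif_pos (by omega), tt_mul_tt]
  simp only [ttilCore_eq]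
  induction d generalizing i with
  | zero => simpa using hsq i h
  | succ d ih =>
    have e : i + (d + 1 + 1) = i + 1 + (d + 1) := by omega
    rw [e, palindromeProd_conj]
    have hX := ih (i + 1) (by omega)
    have hi := hsq i (by omega)
    generalize palindromeProd (ttN n) (i + 1) (i + 1 + (d + 1)) = X at *
    calc ttN n i * X * ttN n i * (ttN n i * X * ttN n i)
        = ttN n i * X * (ttN n i * ttN n i) * X * ttN n i := by group
      _ = zt n * (ttN n i * (X * X) * ttN n i) := by rw [hi, zt_comm]; group
      _ = zt n * zt n * (ttN n i * ttN n i) := by rw [hX, zt_comm]; group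
      _ = zt n := by rw [hi, zt_mul_zt, one_mul]

lemma sec_swap_mul_self (hn : 0 < n) {i j : Fin n} (hij : i < j) :
    sec n (Equiv.swap i j) * sec n (Equiv.swap i j) = zt n := by
  have hg : ttil n i j * ttil n i j = zt n := by
    obtain ⟨d, hd⟩ : ∃ d, (j : ℕ) = i + (d + 1) := ⟨j - i - 1, by omega⟩
    rw [ttil, if_neg (by omega), hd]
    exact ttilCore_mul_self i d (hd ▸ j.2)
  rcases eq_or_eq_zt_mul hn ((spinProj_sec hn _).trans (spinProj_ttil hij.le).symm) with h | h
  · rw [h, hg]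
  · rw [h, mul_assoc, ← mul_assoc _ (zt n), zt_comm, mul_assoc, hg, ← mul_assoc, zt_mul_zt, one_mul]

lemma sec_mul_sec (hn : 0 < n) (x y : Equiv.Perm (Fin n)) :
    sec n x * sec n y = zt n ^ (coc n x y).val * sec n (x * y) := by
  by_cases h : sec n x * sec n y = sec n (x * y)
  · simp [coc, h]
  · have hz := (eq_or_eq_zt_mul hn (g := sec n x * sec n y) (h := sec n (x * y))
      (by simp [spinProj_sec hn])).resolve_left h
    rw [coc, if_neg h, hz, ZMod.val_one, pow_one]

lemma zt_pow_val_add (a b : ZMod 2) : zt n ^ (a + b).val = zt n ^ a.val * zt n ^ b.val := by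
  rw [← pow_add, ZMod.val_add, ← pow_eq_pow_mod]
  rw [pow_two, zt_mul_zt]

lemma zt_pow_val_injective (n : ℕ) : Function.Injective fun a : ZMod 2 => zt n ^ a.val := by
  intro a b h
  have h₀ : orderOf (zt n) = 2 :=
    orderOf_eq_prime (by rw [pow_two, zt_mul_zt]) (zt_ne_one n)
  refine ZMod.val_injective 2 (pow_injOn_Iio_orderOf ?_ ?_ h) <;>
  · rw [h₀]
    exact ZMod.val_lt _

end SpinSection

theorem cocycle_properties (n : ℕ) (hn : 2 ≤ n) :
    (∀ x y : Equiv.Perm (Fin n),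
        sec n x * sec n y = zt n ^ (coc n x y).val * sec n (x * y)) ∧
    (∀ x y w : Equiv.Perm (Fin n),
        coc n x y + coc n (x * y) w = coc n y w + coc n x (y * w)) ∧
    (∀ x : Equiv.Perm (Fin n), coc n 1 x = 0 ∧ coc n x 1 = 0) ∧
    (∀ i j : Fin n, i ≠ j → coc n (Equiv.swap i j) (Equiv.swap i j) = 1) := by
  have hn₀ : 0 < n := by omega
  refine ⟨sec_mul_sec hn₀, fun x y w => zt_pow_val_injective n ?_, fun x => ⟨?_, ?_⟩, ?_⟩
  · have h := mul_assoc (sec n x) (sec n y) (sec n w)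
    rw [sec_mul_sec hn₀ x y, sec_mul_sec hn₀ y w, mul_assoc, sec_mul_sec hn₀ (x * y) w,
      ← mul_assoc (sec n x), ((Commute.pow_right (zt_comm (sec n x)) _).eq), mul_assoc _ (sec n x),
      sec_mul_sec hn₀ x (y * w), ← mul_assoc, ← mul_assoc, ← mul_assoc x y w] at h
    simpa only [zt_pow_val_add] using mul_right_cancel h
  · simp [coc, sec_one hn₀]
  · simp [coc, sec_one hn₀]
  · intro i j hij
    rw [coc, if_neg]
    rw [Equiv.swap_mul_self, sec_one hn₀]
    rcases lt_or_gt_of_ne hij with h | h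
    · rw [sec_swap_mul_self hn₀ h]
      exact zt_ne_one n
    · rw [Equiv.swap_comm, sec_swap_mul_self hn₀ h]
      exact zt_ne_one n
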